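/- arXiv:1801.03908 — 4 statements merged into one kernel-verified Lean document; each statement's English description precedes it below -/
import Mathlib

section
/- Let G be a group, c ∈ ℝ, and ‖·‖ : G → ℝ a function satisfying hypotheses (i) and (ii) with constant c. Then for all x, y ∈ G one has ‖[x,y]‖ ≤ 5c. -/
/-!
Iterating `2 * ℓ x - c ≤ ℓ (x ^ 2)` shows that an asymptotic bound `ℓ (z ^ n) ≤ n * b + o(n)` along
powers of `4` forces `ℓ z ≤ b + c` (`le_of_pow_le`).  Applied to conjugates, this makes `ℓ` conjugation
invariant up to `c` (`conj_le`).  Applied to the square of an element conjugate to both `w * y` and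
`z * w⁻¹`, it gives the splitting inequality `split_le`: such an element has length at most
`(ℓ y + ℓ z + 3 * c) / 2`, because in `(w * y) ^ n * u * (z * w⁻¹) ^ n` the letters `w` and `w⁻¹` can
be stripped off from the two ends, at a cost of `c` per layer.

Write `g = [x, y]` and `f m k = ℓ (x ^ m * g ^ k)` for integers `m`, `k`.  Splitting gives
`f m k ≤ (f (m - 1) k + f (m + 1) (k - 1)) / 2 + 2 * c` (`walk_step`), so `f` is controlled by the random
walk on `ℤ²` with steps `(-1, 0)` and `(1, -1)`.  Started at `(0, n)`, after `2 * n` steps this walk has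
mean `(0, 0)` and standard deviation `O(√n)`, and `f` grows at most linearly, hence
`ℓ (g ^ n) ≤ 4 * c * n + O(√n)` and `ℓ g ≤ 4 * c + c`.  The expectation is never formed: `walk_bound`
propagates an explicit quadratic majorant, which encodes the first two moments of the walk.
-/

namespace CommutatorBound

variable {G : Type*} [Group G] {c : ℝ} {ℓ : G → ℝ}

lemma one_nonneg (htri : ∀ x y : G, ℓ (x * y) ≤ ℓ x + ℓ y) : 0 ≤ ℓ 1 := by
  have := htri 1 1
  rw [mul_one] at this
  linarith

lemma c_nonneg (htri : ∀ x y : G, ℓ (x * y) ≤ ℓ x + ℓ y)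
    (hsq : ∀ x : G, 2 * ℓ x - c ≤ ℓ (x ^ 2)) : 0 ≤ c := by
  have h1 := one_nonneg htri
  have h2 := hsq 1
  rw [one_pow] at h2
  linarith

/-- The term `ℓ 1` covers the exponent `n = 0`, since `ℓ 1` need not vanish. -/
lemma pow_le (htri : ∀ x y : G, ℓ (x * y) ≤ ℓ x + ℓ y) (x : G) (n : ℕ) :
    ℓ (x ^ n) ≤ n * ℓ x + ℓ 1 := by
  induction n with
  | zero => simp
  | succ n ih =>
    have := htri (x ^ n) x
    rw [pow_succ]
    push_cast
    linarith

lemma two_pow_le (hsq : ∀ x : G, 2 * ℓ x - c ≤ ℓ (x ^ 2)) (x : G) (k : ℕ) :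
    2 ^ k * (ℓ x - c) + c ≤ ℓ (x ^ (2 ^ k)) := by
  induction k with
  | zero => simp
  | succ k ih =>
    have := hsq (x ^ (2 ^ k))
    rw [pow_succ, pow_succ, pow_mul]
    linarith

/-- The additive constant `c` is the only loss in passing from the growth rate of `ℓ` along powers of
`z` to `ℓ z` itself.  The error term `K * 2 ^ j` is of the order of the square root of the exponent. -/
lemma le_of_pow_le (htri : ∀ x y : G, ℓ (x * y) ≤ ℓ x + ℓ y)
    (hsq : ∀ x : G, 2 * ℓ x - c ≤ ℓ (x ^ 2)) {z : G} {b K : ℝ}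
    (h : ∀ j : ℕ, ℓ (z ^ (4 ^ j)) ≤ 4 ^ j * b + K * 2 ^ j) : ℓ z ≤ b + c := by
  have hc := c_nonneg htri hsq
  by_contra! hlt
  obtain ⟨j, hj⟩ := pow_unbounded_of_one_lt (K / (ℓ z - (b + c))) (one_lt_two : (1 : ℝ) < 2)
  rw [div_lt_iff₀ (by linarith)] at hj
  have h1 := two_pow_le hsq z (2 * j)
  have h2 := h j
  rw [pow_mul, pow_mul] at h1
  norm_num at h1
  have h4 : (4 : ℝ) ^ j = 2 ^ j * 2 ^ j := by rw [← mul_pow]; norm_num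
  have hpos : (0 : ℝ) < 2 ^ j := by positivity
  have h3 := mul_lt_mul_of_pos_left hj hpos
  rw [h4] at h1 h2
  nlinarith

lemma le_of_pow_le' (htri : ∀ x y : G, ℓ (x * y) ≤ ℓ x + ℓ y)
    (hsq : ∀ x : G, 2 * ℓ x - c ≤ ℓ (x ^ 2)) {z : G} {b K : ℝ}
    (h : ∀ n : ℕ, ℓ (z ^ n) ≤ n * b + K) : ℓ z ≤ b + c := by
  refine le_of_pow_le htri hsq (K := |K|) fun j => ?_
  have h1 := h (4 ^ j)
  push_cast at h1
  have h2 : (1 : ℝ) ≤ 2 ^ j := one_le_pow₀ one_le_two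
  have h3 := le_mul_of_one_le_right (abs_nonneg K) h2
  linarith [le_abs_self K]

lemma conj_le (htri : ∀ x y : G, ℓ (x * y) ≤ ℓ x + ℓ y)
    (hsq : ∀ x : G, 2 * ℓ x - c ≤ ℓ (x ^ 2)) (s x : G) :
    ℓ (s * x * s⁻¹) ≤ ℓ x + c := by
  refine le_of_pow_le' htri hsq (K := ℓ s + ℓ s⁻¹ + ℓ 1) fun n => ?_
  rw [conj_pow]
  linarith [htri (s * x ^ n) s⁻¹, htri s (x ^ n), pow_le htri x n]

/-- Conjugating by `w` moves the outermost `w` and `w⁻¹` together, so each layer costs `c`. -/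
lemma strip_le (htri : ∀ x y : G, ℓ (x * y) ≤ ℓ x + ℓ y)
    (hsq : ∀ x : G, 2 * ℓ x - c ≤ ℓ (x ^ 2)) (w y z u : G) (n : ℕ) :
    ℓ ((w * y) ^ n * u * (z * w⁻¹) ^ n) ≤ n * (ℓ y + ℓ z + c) + ℓ u := by
  induction n with
  | zero => simp
  | succ n ih =>
    have e : (w * y) ^ (n + 1) * u * (z * w⁻¹) ^ (n + 1)
        = w * (y * ((w * y) ^ n * u * (z * w⁻¹) ^ n) * z) * w⁻¹ := by
      rw [pow_succ', pow_succ]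
      simp only [mul_assoc]
    rw [e]
    set v := (w * y) ^ n * u * (z * w⁻¹) ^ n
    push_cast
    linarith [conj_le htri hsq w (y * v * z), htri (y * v) z, htri y v]

/-- An element conjugate to both `w * y` and `z * w⁻¹` is, up to `3 * c / 2`, at most as long as the
average of `y` and `z`. -/
lemma split_le (htri : ∀ x y : G, ℓ (x * y) ≤ ℓ x + ℓ y)
    (hsq : ∀ x : G, 2 * ℓ x - c ≤ ℓ (x ^ 2)) {x s t w y z : G}
    (h1 : x = s * (w * y) * s⁻¹) (h2 : x = t * (z * w⁻¹) * t⁻¹) :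
    ℓ x ≤ (ℓ y + ℓ z + 3 * c) / 2 := by
  have key : ℓ (x ^ 2) ≤ (ℓ y + ℓ z + c) + c := by
    refine le_of_pow_le' htri hsq (K := ℓ s + ℓ (s⁻¹ * t) + ℓ t⁻¹) fun n => ?_
    have e : (x ^ 2) ^ n = s * ((w * y) ^ n * (s⁻¹ * t) * (z * w⁻¹) ^ n) * t⁻¹ := by
      have e1 : x ^ n = s * (w * y) ^ n * s⁻¹ := by rw [h1, conj_pow]
      have e2 : x ^ n = t * (z * w⁻¹) ^ n * t⁻¹ := by rw [h2, conj_pow]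
      calc (x ^ 2) ^ n = x ^ n * x ^ n := by rw [← pow_mul, two_mul, pow_add]
        _ = (s * (w * y) ^ n * s⁻¹) * (t * (z * w⁻¹) ^ n * t⁻¹) := by rw [← e1, ← e2]
        _ = _ := by simp only [mul_assoc]
    rw [e]
    set v := (w * y) ^ n * (s⁻¹ * t) * (z * w⁻¹) ^ n with hv
    have hstrip := strip_le htri hsq w y z (s⁻¹ * t) n
    rw [← hv] at hstrip
    linarith [htri (s * v) t⁻¹, htri s v]
  linarith [hsq x]

lemma walk_step (htri : ∀ x y : G, ℓ (x * y) ≤ ℓ x + ℓ y)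
    (hsq : ∀ x : G, 2 * ℓ x - c ≤ ℓ (x ^ 2)) (x y : G) (m k : ℤ) :
    ℓ (x ^ m * (x * y * x⁻¹ * y⁻¹) ^ k) ≤
      (ℓ (x ^ (m - 1) * (x * y * x⁻¹ * y⁻¹) ^ k)
        + ℓ (x ^ (m + 1) * (x * y * x⁻¹ * y⁻¹) ^ (k - 1))) / 2 + 2 * c := by
  set g := x * y * x⁻¹ * y⁻¹ with hg
  -- Splitting with `w = x`; conjugating once by `(x * y)⁻¹` costs only one `c`.
  have h := split_le htri hsq (x := x ^ m * g ^ k) (s := 1) (t := y) (w := x)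
    (y := x ^ (m - 1) * g ^ k)
    (z := (x * y)⁻¹ * (x ^ (m + 1) * g ^ (k - 1)) * (x * y)⁻¹⁻¹)
    (by
      rw [one_mul, inv_one, mul_one, ← mul_assoc, ← zpow_one_add]
      congr 2
      ring)
    (by
      have e : g ^ k = g ^ (k - 1) * g := by rw [← zpow_add_one, sub_add_cancel]
      rw [e, zpow_add_one, (Commute.zpow_self x m).eq]
      generalize g ^ (k - 1) = a
      rw [hg]
      group)
  linarith [conj_le htri hsq (x * y)⁻¹ (x ^ (m + 1) * g ^ (k - 1))]

lemma zpow_le (htri : ∀ x y : G, ℓ (x * y) ≤ ℓ x + ℓ y) (x : G) (m : ℤ) :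
    ℓ (x ^ m) ≤ (|ℓ x| + |ℓ x⁻¹|) * |(m : ℝ)| + ℓ 1 := by
  obtain ⟨n, rfl | rfl⟩ := m.eq_nat_or_neg
  · have h := pow_le htri x n
    rw [zpow_natCast, Int.cast_natCast, Nat.abs_cast]
    nlinarith [le_abs_self (ℓ x), abs_nonneg (ℓ x⁻¹), Nat.cast_nonneg (α := ℝ) n]
  · have h := pow_le htri x⁻¹ n
    rw [zpow_neg, zpow_natCast, ← inv_pow, Int.cast_neg, Int.cast_natCast, abs_neg, Nat.abs_cast]
    nlinarith [le_abs_self (ℓ x⁻¹), abs_nonneg (ℓ x), Nat.cast_nonneg (α := ℝ) n]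

/-- Averaging over `N` steps of the walk with steps `(-1, 0)` and `(1, -1)`: the second moments of the
end point of the walk started at `(m, k)` are `m ^ 2 + N` and `(k - N / 2) ^ 2 + N / 4`. -/
lemma walk_bound {f : ℤ → ℤ → ℝ} {a b : ℝ}
    (h0 : ∀ m k : ℤ, f m k ≤ a * ((m : ℝ) ^ 2 + (k : ℝ) ^ 2) + b)
    (hf : ∀ m k : ℤ, f m k ≤ (f (m - 1) k + f (m + 1) (k - 1)) / 2 + 2 * c) (N : ℕ) (m k : ℤ) :
    f m k ≤ 2 * c * N + a * (((m : ℝ) ^ 2 + N) + (((k : ℝ) - N / 2) ^ 2 + N / 4)) + b := by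
  induction N generalizing m k with
  | zero => simpa using h0 m k
  | succ N ih =>
    have h1 := ih (m - 1) k
    have h2 := ih (m + 1) (k - 1)
    have h3 := hf m k
    push_cast at h1 h2 ⊢
    linarith

end CommutatorBound

open CommutatorBound in
/-- If `ℓ : G → ℝ` satisfies the triangle inequality and the approximate homogeneity
`ℓ (x^2) ≥ 2 ℓ x - c`, then `ℓ [x,y] ≤ 5c` for every commutator. -/
theorem commutator_bound {G : Type*} [Group G] (c : ℝ) (ℓ : G → ℝ)
    (htri : ∀ x y : G, ℓ (x * y) ≤ ℓ x + ℓ y)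
    (hsq : ∀ x : G, 2 * ℓ x - c ≤ ℓ (x ^ 2)) :
    ∀ x y : G, ℓ (x * y * x⁻¹ * y⁻¹) ≤ 5 * c := by
  intro x y
  have hstep := walk_step htri hsq x y
  set g := x * y * x⁻¹ * y⁻¹
  obtain ⟨D, hD⟩ : ∃ D, D = (|ℓ x| + |ℓ x⁻¹|) + (|ℓ g| + |ℓ g⁻¹|) := ⟨_, rfl⟩
  have hx0 : 0 ≤ |ℓ x| + |ℓ x⁻¹| := by positivity
  have hg0 : 0 ≤ |ℓ g| + |ℓ g⁻¹| := by positivity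
  have hD0 : 0 ≤ D := by linarith
  have h10 := one_nonneg htri
  suffices ℓ g ≤ 4 * c + c by linarith
  refine le_of_pow_le htri hsq (K := 5 * D + 2 * ℓ 1) fun j => ?_
  -- `R` is the square root of the exponent `4 ^ j`, the scale of the walk's fluctuations.
  obtain ⟨R, hR⟩ : ∃ R : ℝ, R = 2 ^ j := ⟨_, rfl⟩
  have hR1 : 1 ≤ R := hR ▸ one_le_pow₀ one_le_two
  have hRpos : 0 < R := by linarith
  have h4 : (4 : ℝ) ^ j = R * R := by rw [hR, ← mul_pow]; norm_num
  have habs : ∀ t : ℝ, |t| ≤ t ^ 2 / R + R := by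
    intro t
    rw [← sub_le_iff_le_add, le_div_iff₀ hRpos, ← sq_abs t]
    nlinarith [sq_nonneg (|t| - R), abs_nonneg t]
  have hlin : ∀ m k : ℤ, ℓ (x ^ m * g ^ k) ≤
      D / R * ((m : ℝ) ^ 2 + (k : ℝ) ^ 2) + (2 * D * R + 2 * ℓ 1) := by
    intro m k
    have hm := zpow_le htri x m
    have hk := zpow_le htri g k
    have hm' : (|ℓ x| + |ℓ x⁻¹|) * |(m : ℝ)| ≤ D * ((m : ℝ) ^ 2 / R + R) :=
      mul_le_mul (by linarith) (habs m) (abs_nonneg _) hD0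
    have hk' : (|ℓ g| + |ℓ g⁻¹|) * |(k : ℝ)| ≤ D * ((k : ℝ) ^ 2 / R + R) :=
      mul_le_mul (by linarith) (habs k) (abs_nonneg _) hD0
    have e : D / R * ((m : ℝ) ^ 2 + (k : ℝ) ^ 2) + (2 * D * R + 2 * ℓ 1)
        = D * ((m : ℝ) ^ 2 / R + R) + D * ((k : ℝ) ^ 2 / R + R) + 2 * ℓ 1 := by ring
    linarith [htri (x ^ m) (g ^ k)]
  have h := walk_bound (f := fun m k => ℓ (x ^ m * g ^ k)) hlin hstep (2 * 4 ^ j) 0 ((4 ^ j : ℕ) : ℤ)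
  simp only [zpow_zero, one_mul, zpow_natCast] at h
  push_cast at h
  rw [h4] at h
  have e : D / R * ((0 : ℝ) ^ 2 + 2 * (R * R) + ((R * R - 2 * (R * R) / 2) ^ 2 + 2 * (R * R) / 4))
      = 5 / 2 * D * R := by
    field_simp
    ring
  rw [e] at h
  rw [h4, ← hR]
  nlinarith [mul_nonneg hD0 hRpos.le, mul_le_mul_of_nonneg_left hR1 h10]
end

section
/- Let G be a group and ‖·‖ : G → ℝ a function with ‖xy‖ ≤ ‖x‖ + ‖y‖ for all x, y ∈ G. Let x, y ∈ G and let H be the subgroup of G generated by x and y. If s ∈ ℝ satisfies 2‖z‖ − ‖z²‖ ≤ s for every z ∈ H, then ‖[x,y]‖ ≤ 5s. -/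
/-!
It suffices to treat a group `G` in which `2 ℓ z - ℓ (z ^ 2) ≤ s` for all `z`, since everything
below takes place inside the subgroup generated by `x` and `y`. Iterating the hypothesis gives
`2 ^ k * ℓ z - (2 ^ k - 1) * s ≤ ℓ (z ^ 2 ^ k)`, so an inequality may be proved for large powers,
up to bounded errors, and then divided by the exponent. In this way one obtains

* `ℓ (g z g⁻¹) ≤ ℓ z + s` (`length_conj_le`);
* if `p` is conjugate both to `w y` and to `z w⁻¹`, then `ℓ p ≤ (ℓ y + ℓ z) / 2 + 3 s / 2`
  (`length_le_of_conj_of_conj`), because the factors `w` and `w⁻¹` in `p ^ n * p ^ n` cancel in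
  pairs by conjugation.

With `c = [x, y]` and `f m k = ℓ (x ^ m * c ^ k)` the second fact yields
`f m k ≤ (f (m - 1) k + f (m + 1) (k - 1)) / 2 + 2 s`. Follow the corresponding random walk from
`(0, n)`: each step lowers `2 k + m` by exactly one, so after `2 n` steps the walk is on the line
`2 k + m = 0`, at typical distance `√n` from the origin. As `f` grows at most linearly, this gives
`f 0 n ≤ 4 s n + O(√n)`. On the other hand `f 0 n = ℓ (c ^ n) ≥ n * ℓ c - (n - 1) * s` when `n` is
a power of two, hence `ℓ c ≤ 5 s`.
-/

theorem nonpos_of_two_pow_mul_le {a C : ℝ} (h : ∀ j : ℕ, 2 ^ j * a ≤ C) : a ≤ 0 := by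
  by_contra! ha
  obtain ⟨j, hj⟩ := pow_unbounded_of_one_lt (C / a) (one_lt_two (α := ℝ))
  rw [div_lt_iff₀ ha] at hj
  exact absurd (h j) (not_le.mpr hj)

theorem le_length_two_pow {G : Type*} [Group G] {ℓ : G → ℝ} {s : ℝ}
    (hs : ∀ z : G, 2 * ℓ z - ℓ (z ^ 2) ≤ s) (z : G) (k : ℕ) :
    2 ^ k * ℓ z - (2 ^ k - 1) * s ≤ ℓ (z ^ 2 ^ k) := by
  induction k with
  | zero => simp
  | succ k ih =>
    have h := hs (z ^ 2 ^ k)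
    rw [← pow_mul, ← pow_succ] at h
    rw [pow_succ (2 : ℝ)]
    linarith

theorem length_pow_le {G : Type*} [Group G] {ℓ : G → ℝ}
    (htri : ∀ x y : G, ℓ (x * y) ≤ ℓ x + ℓ y) (z : G) (n : ℕ) :
    ℓ (z ^ n) ≤ n * ℓ z + ℓ 1 := by
  induction n with
  | zero => simp
  | succ n ih =>
    rw [pow_succ]
    push_cast
    linarith [htri (z ^ n) z]

theorem length_zpow_le {G : Type*} [Group G] {ℓ : G → ℝ}
    (htri : ∀ x y : G, ℓ (x * y) ≤ ℓ x + ℓ y) (z : G) (n : ℤ) :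
    ℓ (z ^ n) ≤ |(n : ℝ)| * (|ℓ z| + |ℓ z⁻¹|) + ℓ 1 := by
  have key : ∀ (m : ℕ) (a b : ℝ), a ≤ b → (m : ℝ) * a ≤ m * b :=
    fun m a b h => mul_le_mul_of_nonneg_left h m.cast_nonneg
  obtain ⟨m, rfl | rfl⟩ := n.eq_nat_or_neg
  · have h := length_pow_le htri z m
    have h' := key m (ℓ z) (|ℓ z| + |ℓ z⁻¹|) (by linarith [le_abs_self (ℓ z), abs_nonneg (ℓ z⁻¹)])
    simp only [zpow_natCast, Int.cast_natCast, Nat.abs_cast]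
    linarith
  · have h := length_pow_le htri z⁻¹ m
    have h' := key m (ℓ z⁻¹) (|ℓ z| + |ℓ z⁻¹|)
      (by linarith [le_abs_self (ℓ z⁻¹), abs_nonneg (ℓ z)])
    simp only [zpow_neg, zpow_natCast, Int.cast_neg, Int.cast_natCast, abs_neg, Nat.abs_cast]
    rw [← inv_pow]
    linarith

theorem length_conj_le {G : Type*} [Group G] {ℓ : G → ℝ} {s : ℝ}
    (htri : ∀ x y : G, ℓ (x * y) ≤ ℓ x + ℓ y)
    (hs : ∀ z : G, 2 * ℓ z - ℓ (z ^ 2) ≤ s) (g z : G) :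
    ℓ (g * z * g⁻¹) ≤ ℓ z + s := by
  have h : ℓ (g * z * g⁻¹) - ℓ z - s ≤ 0 := by
    refine nonpos_of_two_pow_mul_le (C := ℓ g + ℓ 1 + ℓ g⁻¹ - s) fun k => ?_
    have h1 := le_length_two_pow hs (g * z * g⁻¹) k
    rw [conj_pow] at h1
    have h2 := length_pow_le htri z (2 ^ k)
    push_cast at h2
    linarith [htri (g * z ^ 2 ^ k) g⁻¹, htri g (z ^ 2 ^ k)]
  linarith

theorem length_pow_mul_pow_le {G : Type*} [Group G] {ℓ : G → ℝ} {s : ℝ}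
    (htri : ∀ x y : G, ℓ (x * y) ≤ ℓ x + ℓ y)
    (hs : ∀ z : G, 2 * ℓ z - ℓ (z ^ 2) ≤ s) (w y z g : G) (n : ℕ) :
    ℓ ((w * y) ^ n * g * (z * w⁻¹) ^ n) ≤ n * (ℓ y + ℓ z + s) + ℓ g := by
  induction n with
  | zero => simp
  | succ n ih =>
    have e : (w * y) ^ (n + 1) * g * (z * w⁻¹) ^ (n + 1)
        = w * (y * ((w * y) ^ n * g * (z * w⁻¹) ^ n) * z) * w⁻¹ := by
      rw [pow_succ', pow_succ (z * w⁻¹)]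
      group
    rw [e]
    have h1 := length_conj_le htri hs w (y * ((w * y) ^ n * g * (z * w⁻¹) ^ n) * z)
    have h2 := htri (y * ((w * y) ^ n * g * (z * w⁻¹) ^ n)) z
    have h3 := htri y ((w * y) ^ n * g * (z * w⁻¹) ^ n)
    push_cast
    linarith

theorem length_le_of_conj_of_conj {G : Type*} [Group G] {ℓ : G → ℝ} {s : ℝ}
    (htri : ∀ x y : G, ℓ (x * y) ≤ ℓ x + ℓ y)
    (hs : ∀ z : G, 2 * ℓ z - ℓ (z ^ 2) ≤ s) {p w y z a b : G}
    (ha : p = a * (w * y) * a⁻¹) (hb : p = b * (z * w⁻¹) * b⁻¹) :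
    ℓ p ≤ (ℓ y + ℓ z) / 2 + 3 / 2 * s := by
  have h : 2 * ℓ p - (ℓ y + ℓ z) - 3 * s ≤ 0 := by
    refine nonpos_of_two_pow_mul_le (C := ℓ a + ℓ (a⁻¹ * b) + ℓ b⁻¹ - s) fun k => ?_
    have h1 := le_length_two_pow hs p (k + 1)
    have e : p ^ 2 ^ (k + 1)
        = a * ((w * y) ^ 2 ^ k * (a⁻¹ * b) * (z * w⁻¹) ^ 2 ^ k) * b⁻¹ := by
      have e1 : p ^ 2 ^ k = a * (w * y) ^ 2 ^ k * a⁻¹ := by rw [ha, conj_pow]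
      have e2 : p ^ 2 ^ k = b * (z * w⁻¹) ^ 2 ^ k * b⁻¹ := by rw [hb, conj_pow]
      rw [pow_succ, mul_two, pow_add]
      nth_rw 1 [e1]
      rw [e2]
      simp only [mul_assoc]
    rw [e, pow_succ (2 : ℝ)] at h1
    have h2 := length_pow_mul_pow_le htri hs w y z (a⁻¹ * b) (2 ^ k)
    push_cast at h2
    have h3 := htri (a * ((w * y) ^ 2 ^ k * (a⁻¹ * b) * (z * w⁻¹) ^ 2 ^ k)) b⁻¹
    have h4 := htri a ((w * y) ^ 2 ^ k * (a⁻¹ * b) * (z * w⁻¹) ^ 2 ^ k)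
    linarith
  linarith

theorem length_zpow_mul_commutator_zpow_le {G : Type*} [Group G] {ℓ : G → ℝ} {s : ℝ}
    (htri : ∀ x y : G, ℓ (x * y) ≤ ℓ x + ℓ y)
    (hs : ∀ z : G, 2 * ℓ z - ℓ (z ^ 2) ≤ s) (x y : G) (m k : ℤ) :
    ℓ (x ^ m * (x * y * x⁻¹ * y⁻¹) ^ k) ≤
      (ℓ (x ^ (m - 1) * (x * y * x⁻¹ * y⁻¹) ^ k)
        + ℓ (x ^ (m + 1) * (x * y * x⁻¹ * y⁻¹) ^ (k - 1))) / 2 + 2 * s := by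
  obtain ⟨c, hc⟩ : ∃ c, c = x * y * x⁻¹ * y⁻¹ := ⟨_, rfl⟩
  rw [← hc]
  have h1 : ℓ (x ^ m * c ^ k) ≤
      (ℓ (x ^ (m - 1) * c ^ k) + ℓ (y⁻¹ * (x ^ m * c ^ (k - 1) * x) * y)) / 2 + 3 / 2 * s := by
    refine length_le_of_conj_of_conj htri hs (w := x) (a := 1) (b := y) ?_ ?_
    · rw [← mul_assoc x, ← zpow_one_add]
      simp
    · have e : c ^ k = c ^ (k - 1) * c := by rw [← zpow_add_one, sub_add_cancel]
      rw [e]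
      nth_rw 2 [hc]
      simp only [mul_assoc, mul_inv_cancel_left]
  -- a single conjugation takes `x ^ (m + 1) * c ^ (k - 1)` to this element, at the cost of one `s`
  have h2 := length_conj_le htri hs (y⁻¹ * x⁻¹) (x ^ (m + 1) * c ^ (k - 1))
  have e : y⁻¹ * x⁻¹ * (x ^ (m + 1) * c ^ (k - 1)) * (y⁻¹ * x⁻¹)⁻¹
      = y⁻¹ * (x ^ m * c ^ (k - 1) * x) * y := by
    rw [add_comm m 1, zpow_one_add]
    simp only [mul_assoc, mul_inv_rev, inv_inv, inv_mul_cancel_left]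
  rw [e] at h2
  linarith

/-- The random walk estimate in deterministic form: if `N` steps lead from `(m, k)` to the line
`2 k + m = 0`, then `m ^ 2 + N` is the expected square of the first coordinate on arrival. -/
theorem walk_bound {f : ℤ → ℤ → ℝ} {t K R : ℝ}
    (hrec : ∀ m k, f m k ≤ (f (m - 1) k + f (m + 1) (k - 1)) / 2 + t)
    (hbase : ∀ m k : ℤ, 2 * k + m = 0 → f m k ≤ K * (1 + R + (m : ℝ) ^ 2 / R)) (N : ℕ) :
    ∀ m k : ℤ, 2 * k + m = N → f m k ≤ t * N + K * (1 + R + ((m : ℝ) ^ 2 + N) / R) := by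
  induction N with
  | zero =>
    intro m k h
    simpa using hbase m k (by simpa using h)
  | succ N ih =>
    intro m k h
    push_cast at h
    have h1 := ih (m - 1) k (by lia)
    have h2 := ih (m + 1) (k - 1) (by lia)
    push_cast at h1 h2 ⊢
    have e : (K * (1 + R + (((m : ℝ) - 1) ^ 2 + N) / R)
        + K * (1 + R + (((m : ℝ) + 1) ^ 2 + N) / R)) / 2
        = K * (1 + R + ((m : ℝ) ^ 2 + (N + 1)) / R) := by ring
    linarith [hrec m k]

theorem commutator_bound_global {G : Type*} [Group G] {ℓ : G → ℝ} {s : ℝ}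
    (htri : ∀ x y : G, ℓ (x * y) ≤ ℓ x + ℓ y)
    (hs : ∀ z : G, 2 * ℓ z - ℓ (z ^ 2) ≤ s) (x y : G) :
    ℓ (x * y * x⁻¹ * y⁻¹) ≤ 5 * s := by
  have hrec := length_zpow_mul_commutator_zpow_le htri hs x y
  obtain ⟨c, hc⟩ : ∃ c, c = x * y * x⁻¹ * y⁻¹ := ⟨_, rfl⟩
  rw [← hc] at hrec ⊢
  have h1 : 0 ≤ ℓ 1 := by
    have := htri 1 1
    rw [mul_one] at this
    linarith
  have hs0 : 0 ≤ s := by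
    have := hs 1
    rw [one_pow] at this
    linarith
  obtain ⟨A, hA⟩ : ∃ A, A = |ℓ x| + |ℓ x⁻¹| := ⟨_, rfl⟩
  obtain ⟨B, hB⟩ : ∃ B, B = |ℓ c| + |ℓ c⁻¹| := ⟨_, rfl⟩
  have hA0 : 0 ≤ A := by rw [hA]; positivity
  have hB0 : 0 ≤ B := by rw [hB]; positivity
  obtain ⟨K, hK⟩ : ∃ K, K = 2 * A + B + 2 * ℓ 1 := ⟨_, rfl⟩
  have hK0 : 0 ≤ K := by rw [hK]; positivity
  have hbase : ∀ R : ℝ, 0 < R → ∀ m k : ℤ, 2 * k + m = 0 →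
      ℓ (x ^ m * c ^ k) ≤ K * (1 + R + (m : ℝ) ^ 2 / R) := by
    intro R hR m k hmk
    have hm : (m : ℝ) = -(2 * k) := by
      have : m = -(2 * k) := by lia
      rw [this]; push_cast; ring
    have hx := length_zpow_le htri x m
    have hy := length_zpow_le htri c k
    rw [← hA, hm, abs_neg, abs_mul, abs_two] at hx
    rw [← hB] at hy
    have hk : |(k : ℝ)| ≤ R + (m : ℝ) ^ 2 / R := by
      rw [← sub_le_iff_le_add', le_div_iff₀ hR, hm]
      nlinarith [sq_abs (k : ℝ), sq_nonneg (|(k : ℝ)| - R), sq_nonneg (k : ℝ), abs_nonneg (k : ℝ)]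
    calc ℓ (x ^ m * c ^ k) ≤ K * (1 + |(k : ℝ)|) := by
          rw [hK]
          nlinarith [htri (x ^ m) (c ^ k), abs_nonneg (k : ℝ),
            mul_nonneg h1 (abs_nonneg (k : ℝ))]
      _ ≤ K * (1 + R + (m : ℝ) ^ 2 / R) := by
          rw [add_assoc]
          gcongr
  have h : ℓ c - 5 * s ≤ 0 := by
    refine nonpos_of_two_pow_mul_le (C := 4 * K) fun j => ?_
    obtain ⟨R, hR⟩ : ∃ R : ℝ, R = 2 ^ j := ⟨_, rfl⟩
    have hR1 : 1 ≤ R := by rw [hR]; exact one_le_pow₀ one_le_two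
    have hR0 : 0 < R := by linarith
    have hRR : (2 : ℝ) ^ (2 * j) = R * R := by rw [hR]; ring
    -- start at `(0, n)` with `n = R ^ 2`, so that `R = √n` balances the two error terms
    have hw := walk_bound (f := fun m k => ℓ (x ^ m * c ^ k)) hrec (hbase R hR0)
      (2 * 2 ^ (2 * j)) 0 ((2 ^ (2 * j) : ℕ) : ℤ) (by push_cast; ring)
    have hl := le_length_two_pow hs c (2 * j)
    simp only [zpow_zero, one_mul, zpow_natCast] at hw
    push_cast at hw
    rw [hRR] at hw hl
    have e : ((0 : ℝ) ^ 2 + 2 * (R * R)) / R = 2 * R := by field_simp; ring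
    rw [e] at hw
    rw [← hR]
    have h3 : R * (R * (ℓ c - 5 * s)) ≤ R * (4 * K) := by
      nlinarith [mul_le_mul_of_nonneg_left hR1 hK0]
    exact le_of_mul_le_mul_left h3 hR0
  linarith

/-- Local version: if `2 ℓ z - ℓ (z^2) ≤ s` for every `z` in the subgroup generated by `x`
and `y`, then `ℓ [x,y] ≤ 5 s`. -/
theorem commutator_bound_local {G : Type*} [Group G] (ℓ : G → ℝ)
    (htri : ∀ x y : G, ℓ (x * y) ≤ ℓ x + ℓ y)
    (x y : G) (s : ℝ)
    (hs : ∀ z ∈ Subgroup.closure ({x, y} : Set G), 2 * ℓ z - ℓ (z ^ 2) ≤ s) :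
    ℓ (x * y * x⁻¹ * y⁻¹) ≤ 5 * s := by
  have hx : x ∈ Subgroup.closure ({x, y} : Set G) := Subgroup.subset_closure (by simp)
  have hy : y ∈ Subgroup.closure ({x, y} : Set G) := Subgroup.subset_closure (by simp)
  exact commutator_bound_global (G := Subgroup.closure ({x, y} : Set G)) (ℓ := fun z => ℓ z)
    (fun a b => htri a b) (fun z => hs z z.2) ⟨x, hx⟩ ⟨y, hy⟩
end

section
/- Let G be a group, c ∈ ℝ, and ‖·‖ : G → ℝ a function satisfying hypotheses (i) and (ii) with constant c. Let x ∈ [G,G] and let s ≥ 0 be a real number such that for every ε > 0 there exists an integer n ≥ 1 with xⁿ expressible as a product of at most (s + ε)·n commutators. Then ‖x‖ ≤ (5s + 1)·c. -/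
/-!
Write `ℓ` for the pseudo-length. Iterating `hsq` along powers of two shows that linear growth
`ℓ (x ^ N) ≤ N * B + D` forces `ℓ x ≤ B + c` (`le_of_pow_growth`). This principle gives, in turn:

* `ℓ` is conjugation invariant up to `c` (`conj_le`);
* if `a` is conjugate to both `w * y` and `z * w⁻¹`, then `2 * ℓ a ≤ ℓ y + ℓ z + 3 * c`
  (`splitting`), because in `(w * y) ^ N * g * (z * w⁻¹) ^ N` the outer `w` and `w⁻¹` can be
  stripped off as conjugations, one pair at a time;
* every commutator has length at most `5 * c` (`commutator_le`). With `g = [x, y]`, the splitting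
  inequality bounds `f (m, k) = ℓ (x ^ m * g ^ k)` by the average of `f (m - 1, k)` and
  `f (m + 1, k - 1)`, plus `2 * c`. Following this random walk from `(0, n)` for `2 * n` steps
  ends on the line `m + 2 * k = 0` at distance of order `√n` from the origin, so
  `ℓ (g ^ n) ≤ 4 * c * n + o(n)`.

Finally, if `x ^ n` is a product of `r` commutators, then `ℓ (x ^ N) ≤ N * (5 * c * r / n) + O(1)`,
and the growth principle gives `ℓ x ≤ 5 * c * r / n + c`; let `r / n` approach `s`.
-/

namespace PseudoLength

variable {G : Type*} [Group G] {c : ℝ} {ℓ : G → ℝ}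

lemma pow_two_pow_lower (hsq : ∀ x : G, 2 * ℓ x - c ≤ ℓ (x ^ 2)) (x : G) (j : ℕ) :
    2 ^ j * (ℓ x - c) + c ≤ ℓ (x ^ (2 ^ j)) := by
  induction j with
  | zero => simp
  | succ j ih =>
    have h := hsq (x ^ (2 ^ j))
    rw [← pow_mul, ← pow_succ] at h
    rw [pow_succ (2 : ℝ)]
    linarith

lemma one_nonneg (htri : ∀ x y : G, ℓ (x * y) ≤ ℓ x + ℓ y) : 0 ≤ ℓ 1 := by
  have h := htri 1 1
  rw [mul_one] at h
  linarith

lemma const_nonneg (htri : ∀ x y : G, ℓ (x * y) ≤ ℓ x + ℓ y)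
    (hsq : ∀ x : G, 2 * ℓ x - c ≤ ℓ (x ^ 2)) : 0 ≤ c := by
  have h := hsq 1
  have h1 := one_nonneg htri
  rw [one_pow] at h
  linarith

/-- The growth principle: `ℓ x` exceeds the linear growth rate of `ℓ (x ^ N)` by at most `c`. -/
lemma le_of_pow_growth (htri : ∀ x y : G, ℓ (x * y) ≤ ℓ x + ℓ y)
    (hsq : ∀ x : G, 2 * ℓ x - c ≤ ℓ (x ^ 2)) {x : G} (B D : ℝ)
    (h : ∀ N : ℕ, ℓ (x ^ N) ≤ N * B + D) : ℓ x ≤ B + c := by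
  by_contra! hlt
  have hpos : 0 < ℓ x - c - B := by linarith
  have hc := const_nonneg htri hsq
  obtain ⟨j, hj⟩ := pow_unbounded_of_one_lt (D / (ℓ x - c - B)) (one_lt_two (α := ℝ))
  rw [div_lt_iff₀ hpos] at hj
  have h1 := pow_two_pow_lower hsq x j
  have h2 := h (2 ^ j)
  push_cast at h2
  linarith

lemma pow_le (htri : ∀ x y : G, ℓ (x * y) ≤ ℓ x + ℓ y) (x : G) (N : ℕ) :
    ℓ (x ^ N) ≤ N * ℓ x + ℓ 1 := by
  induction N with
  | zero => simp
  | succ N ih =>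
    have h := htri (x ^ N) x
    rw [← pow_succ] at h
    push_cast
    linarith

lemma zpow_le (htri : ∀ x y : G, ℓ (x * y) ≤ ℓ x + ℓ y) (x : G) (k : ℤ) :
    ℓ (x ^ k) ≤ |(k : ℝ)| * (|ℓ x| + |ℓ x⁻¹|) + ℓ 1 := by
  obtain ⟨n, rfl | rfl⟩ := k.eq_nat_or_neg
  · have h := pow_le htri x n
    have h2 : (n : ℝ) * ℓ x ≤ n * (|ℓ x| + |ℓ x⁻¹|) :=
      mul_le_mul_of_nonneg_left
        (by linarith [le_abs_self (ℓ x), abs_nonneg (ℓ x⁻¹)]) n.cast_nonneg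
    simp only [zpow_natCast, Int.cast_natCast, Nat.abs_cast]
    linarith
  · have h := pow_le htri x⁻¹ n
    have h2 : (n : ℝ) * ℓ x⁻¹ ≤ n * (|ℓ x| + |ℓ x⁻¹|) :=
      mul_le_mul_of_nonneg_left
        (by linarith [le_abs_self (ℓ x⁻¹), abs_nonneg (ℓ x)]) n.cast_nonneg
    simp only [zpow_neg, zpow_natCast, Int.cast_neg, Int.cast_natCast, abs_neg, Nat.abs_cast,
      ← inv_pow]
    linarith

lemma conj_le (htri : ∀ x y : G, ℓ (x * y) ≤ ℓ x + ℓ y)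
    (hsq : ∀ x : G, 2 * ℓ x - c ≤ ℓ (x ^ 2)) (y x : G) :
    ℓ (y * x * y⁻¹) ≤ ℓ x + c := by
  refine le_of_pow_growth htri hsq _ (ℓ 1 + ℓ y + ℓ y⁻¹) fun N => ?_
  rw [conj_pow]
  linarith [htri (y * x ^ N) y⁻¹, htri y (x ^ N), pow_le htri x N]

/-- The splitting inequality for an element `a` conjugate to both `w * y` and `z * w⁻¹`. -/
lemma splitting (htri : ∀ x y : G, ℓ (x * y) ≤ ℓ x + ℓ y)
    (hsq : ∀ x : G, 2 * ℓ x - c ≤ ℓ (x ^ 2)) {a w y z p q : G}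
    (h1 : a = p * (w * y) * p⁻¹) (h2 : a = q * (z * w⁻¹) * q⁻¹) :
    2 * ℓ a ≤ ℓ y + ℓ z + 3 * c := by
  have key : ∀ (g : G) (N : ℕ),
      ℓ ((w * y) ^ N * g * (z * w⁻¹) ^ N) ≤ N * (ℓ y + ℓ z + c) + ℓ g := by
    intro g N
    induction N with
    | zero => simp
    | succ N ih =>
      have e : (w * y) ^ (N + 1) * g * (z * w⁻¹) ^ (N + 1)
          = w * (y * ((w * y) ^ N * g * (z * w⁻¹) ^ N) * z) * w⁻¹ := by
        rw [pow_succ' (w * y), pow_succ (z * w⁻¹)]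
        group
      rw [e]
      push_cast
      linarith [conj_le htri hsq w (y * ((w * y) ^ N * g * (z * w⁻¹) ^ N) * z),
        htri (y * ((w * y) ^ N * g * (z * w⁻¹) ^ N)) z,
        htri y ((w * y) ^ N * g * (z * w⁻¹) ^ N)]
  have hgrow : ℓ (a ^ 2) ≤ (ℓ y + ℓ z + c) + c := by
    refine le_of_pow_growth htri hsq _ (ℓ p + ℓ (p⁻¹ * q) + ℓ q⁻¹) fun N => ?_
    -- `a ^ (2 * N) = a ^ N * a ^ N`, with one description of `a` used for each factor
    have e : (a ^ 2) ^ N = p * ((w * y) ^ N * (p⁻¹ * q) * (z * w⁻¹) ^ N) * q⁻¹ := by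
      have e1 : a ^ N = p * (w * y) ^ N * p⁻¹ := by rw [h1, conj_pow]
      have e2 : a ^ N = q * (z * w⁻¹) ^ N * q⁻¹ := by rw [h2, conj_pow]
      calc (a ^ 2) ^ N = a ^ N * a ^ N := by rw [← pow_mul, two_mul, pow_add]
        _ = (p * (w * y) ^ N * p⁻¹) * (q * (z * w⁻¹) ^ N * q⁻¹) := by rw [← e1, ← e2]
        _ = _ := by simp only [mul_assoc]
    rw [e]
    linarith [htri (p * ((w * y) ^ N * (p⁻¹ * q) * (z * w⁻¹) ^ N)) q⁻¹,
      htri p ((w * y) ^ N * (p⁻¹ * q) * (z * w⁻¹) ^ N), key (p⁻¹ * q) N]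
  linarith [hsq a]

/-- One step of the random walk: `x ^ m * g ^ k` with `g = [x, y]` is conjugate to both
`x * (x ^ (m - 1) * g ^ k)` and `z * x⁻¹`, where `z = y⁻¹ * x ^ m * g ^ (k - 1) * x * y`
is in turn conjugate to `x ^ (m + 1) * g ^ (k - 1)`. -/
lemma walk_step (htri : ∀ x y : G, ℓ (x * y) ≤ ℓ x + ℓ y)
    (hsq : ∀ x : G, 2 * ℓ x - c ≤ ℓ (x ^ 2)) (x y : G) (m k : ℤ) :
    2 * ℓ (x ^ m * (x * y * x⁻¹ * y⁻¹) ^ k) ≤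
      ℓ (x ^ (m - 1) * (x * y * x⁻¹ * y⁻¹) ^ k)
        + ℓ (x ^ (m + 1) * (x * y * x⁻¹ * y⁻¹) ^ (k - 1)) + 4 * c := by
  set g := x * y * x⁻¹ * y⁻¹ with hg
  have h := splitting htri hsq (a := x ^ m * g ^ k) (w := x) (y := x ^ (m - 1) * g ^ k)
    (z := (y⁻¹ * x⁻¹) * (x ^ (m + 1) * g ^ (k - 1)) * (y⁻¹ * x⁻¹)⁻¹)
    (p := 1) (q := y) (by rw [zpow_sub_one]; group)
    (by
      have e : x ^ (m + 1) = x * x ^ m := by rw [add_comm, zpow_one_add]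
      have e2 : g ^ k = g ^ (k - 1) * g := by rw [← zpow_add_one, sub_add_cancel]
      rw [e, e2]
      generalize g ^ (k - 1) = u
      generalize x ^ m = v
      rw [hg]
      group)
  have h2 := conj_le htri hsq (y⁻¹ * x⁻¹) (x ^ (m + 1) * g ^ (k - 1))
  linarith

lemma commutator_le (htri : ∀ x y : G, ℓ (x * y) ≤ ℓ x + ℓ y)
    (hsq : ∀ x : G, 2 * ℓ x - c ≤ ℓ (x ^ 2)) (x y : G) :
    ℓ (x * y * x⁻¹ * y⁻¹) ≤ 5 * c := by
  set g := x * y * x⁻¹ * y⁻¹ with hg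
  obtain ⟨L, hL⟩ : ∃ L : ℝ, ∀ k : ℤ, ℓ (x ^ (-2 * k) * g ^ k) ≤ L * |(k : ℝ)| + 2 * ℓ 1 := by
    refine ⟨2 * (|ℓ x| + |ℓ x⁻¹|) + (|ℓ g| + |ℓ g⁻¹|), fun k => ?_⟩
    have h1 := zpow_le htri x (-2 * k)
    have h2 := zpow_le htri g k
    push_cast at h1
    rw [abs_mul, abs_neg, abs_two] at h1
    linarith [htri (x ^ (-2 * k)) (g ^ k)]
  refine le_of_forall_pos_le_add fun δ hδ => ?_
  -- The linear boundary bound is replaced by a quadratic one: `m ^ 2 + t` is a martingale-type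
  -- quantity, exactly preserved by averaging over `m ± 1` while `t = m + 2 * k` drops by one.
  have walk : ∀ (t : ℕ) (k : ℤ), ℓ (x ^ ((t : ℤ) - 2 * k) * g ^ k) ≤
      2 * c * t + δ / 2 * (((t : ℝ) - 2 * k) ^ 2 + t) + (L ^ 2 / (8 * δ) + 2 * ℓ 1) := by
    intro t
    induction t with
    | zero =>
      intro k
      have h := hL k
      have hq : L * |(k : ℝ)| ≤ 2 * δ * (k : ℝ) ^ 2 + L ^ 2 / (8 * δ) := by
        have e : 2 * δ * (k : ℝ) ^ 2 + L ^ 2 / (8 * δ) - L * |(k : ℝ)|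
            = (4 * δ * |(k : ℝ)| - L) ^ 2 / (8 * δ) := by
          rw [← sq_abs (k : ℝ)]
          field_simp
          ring
        have : 0 ≤ (4 * δ * |(k : ℝ)| - L) ^ 2 / (8 * δ) := by positivity
        linarith
      have e : ((0 : ℕ) : ℤ) - 2 * k = -2 * k := by push_cast; ring
      rw [e]
      push_cast
      linarith
    | succ t ih =>
      intro k
      have h := walk_step htri hsq x y (((t + 1 : ℕ) : ℤ) - 2 * k) k
      rw [← hg] at h
      have e1 : ((t + 1 : ℕ) : ℤ) - 2 * k - 1 = (t : ℤ) - 2 * k := by push_cast; ring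
      have e2 : ((t + 1 : ℕ) : ℤ) - 2 * k + 1 = (t : ℤ) - 2 * (k - 1) := by push_cast; ring
      rw [e1, e2] at h
      have i1 := ih k
      have i2 := ih (k - 1)
      push_cast at i1 i2 ⊢
      push_cast at h
      linarith
  have hgrow : ℓ g ≤ (4 * c + δ) + c := by
    refine le_of_pow_growth htri hsq _ (L ^ 2 / (8 * δ) + 2 * ℓ 1) fun N => ?_
    have h := walk (2 * N) N
    have e : ((2 * N : ℕ) : ℤ) - 2 * (N : ℤ) = 0 := by push_cast; ring
    rw [e, zpow_zero, one_mul, zpow_natCast] at h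
    push_cast at h
    linarith
  linarith

lemma commutators_mul_le (htri : ∀ x y : G, ℓ (x * y) ≤ ℓ x + ℓ y)
    (hsq : ∀ x : G, 2 * ℓ x - c ≤ ℓ (x ^ 2)) (l : List (G × G)) (y : G) :
    ℓ ((l.map fun p => p.1 * p.2 * p.1⁻¹ * p.2⁻¹).prod * y) ≤ l.length * (5 * c) + ℓ y := by
  induction l with
  | nil => simp
  | cons p l ih =>
    rw [List.map_cons, List.prod_cons, List.length_cons, mul_assoc]
    push_cast
    linarith [commutator_le htri hsq p.1 p.2, htri (p.1 * p.2 * p.1⁻¹ * p.2⁻¹)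
      ((l.map fun p => p.1 * p.2 * p.1⁻¹ * p.2⁻¹).prod * y)]

/-- If `x ^ n` is a product of `r` commutators, then `ℓ x ≤ 5 * c * r / n + c`. -/
lemma le_of_pow_eq_commutators (htri : ∀ x y : G, ℓ (x * y) ≤ ℓ x + ℓ y)
    (hsq : ∀ x : G, 2 * ℓ x - c ≤ ℓ (x ^ 2)) {x : G} {n : ℕ} (hn : 1 ≤ n) (l : List (G × G))
    (hx : x ^ n = (l.map fun p => p.1 * p.2 * p.1⁻¹ * p.2⁻¹).prod) :
    ℓ x ≤ l.length * (5 * c) / n + c := by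
  have hc := const_nonneg htri hsq
  have hn0 : (0 : ℝ) < n := by exact_mod_cast hn
  have hpow : ∀ (q : ℕ) (y : G),
      ℓ ((x ^ n) ^ q * y) ≤ q * (l.length * (5 * c)) + ℓ y := by
    intro q y
    induction q with
    | zero => simp
    | succ q ih =>
      have h := commutators_mul_le htri hsq l ((x ^ n) ^ q * y)
      rw [← hx, ← mul_assoc, ← pow_succ'] at h
      push_cast
      linarith
  refine le_of_pow_growth htri hsq _ (∑ r ∈ Finset.range n, |ℓ (x ^ r)|) fun N => ?_
  have h := hpow (N / n) (x ^ (N % n))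
  rw [← pow_mul, ← pow_add, Nat.div_add_mod] at h
  have hr : |ℓ (x ^ (N % n))| ≤ ∑ r ∈ Finset.range n, |ℓ (x ^ r)| :=
    Finset.single_le_sum (f := fun r => |ℓ (x ^ r)|) (fun _ _ => abs_nonneg _)
      (Finset.mem_range.2 (Nat.mod_lt N hn))
  have hq : ((N / n : ℕ) : ℝ) * (l.length * (5 * c)) ≤ (N / n : ℝ) * (l.length * (5 * c)) :=
    mul_le_mul_of_nonneg_right Nat.cast_div_le (by positivity)
  have e : (N / n : ℝ) * (l.length * (5 * c)) = N * (l.length * (5 * c) / n) := by ring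
  linarith [le_abs_self (ℓ (x ^ (N % n)))]

end PseudoLength

/-- Stable commutator length bound: if `x ∈ [G,G]` has stable commutator length at most `s`
(for every `ε > 0`, some power `x^n` is a product of at most `(s + ε) n` commutators),
then `ℓ x ≤ (5 s + 1) c`. -/
theorem stable_commutator_length_bound {G : Type*} [Group G] (c : ℝ) (ℓ : G → ℝ)
    (htri : ∀ x y : G, ℓ (x * y) ≤ ℓ x + ℓ y)
    (hsq : ∀ x : G, 2 * ℓ x - c ≤ ℓ (x ^ 2))
    (x : G) (hxG : x ∈ commutator G) (s : ℝ) (hs : 0 ≤ s)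
    (hscl : ∀ ε : ℝ, 0 < ε → ∃ n : ℕ, 1 ≤ n ∧ ∃ l : List (G × G),
      (l.length : ℝ) ≤ (s + ε) * n ∧
      x ^ n = (l.map fun p => p.1 * p.2 * p.1⁻¹ * p.2⁻¹).prod) :
    ℓ x ≤ (5 * s + 1) * c := by
  have hc := PseudoLength.const_nonneg htri hsq
  refine le_of_forall_pos_le_add fun ε hε => ?_
  -- `η` is chosen so that `5 * η * c ≤ ε`, allowing for `c = 0`
  set η : ℝ := ε / (5 * (c + 1)) with hη
  have hη0 : 0 < η := by positivity
  obtain ⟨n, hn, l, hl, hx⟩ := hscl η hη0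
  have hn0 : (0 : ℝ) < n := by exact_mod_cast hn
  have h := PseudoLength.le_of_pow_eq_commutators htri hsq hn l hx
  have h2 : l.length * (5 * c) / n ≤ (s + η) * (5 * c) := by
    rw [div_le_iff₀ hn0]
    have := mul_le_mul_of_nonneg_right hl (by positivity : 0 ≤ 5 * c)
    linarith
  have h3 : η * (5 * (c + 1)) = ε := by
    rw [hη]
    field_simp
  linarith
end

section
/- Let G be a perfect group (G = [G,G]) on which the stable commutator length vanishes, in the sense that for every x ∈ G and every ε > 0 there exists an integer n ≥ 1 such that xⁿ is a product of at most ε·n commutators. Let c ∈ ℝ and let ‖·‖ : G → ℝ satisfy hypotheses (i) and (ii) with constant c. Then ‖·‖ is bounded: ‖x‖ ≤ c for all x ∈ G. -/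
/-!
The heart of the matter is the uniform bound `ℓ ⁅x, y⁆ ≤ 5 c` on commutators.

Iterating `2 ℓ x - c ≤ ℓ (x ^ 2)` shows that a linear bound `ℓ (x ^ n) ≤ a n + b` for all `n`
forces `ℓ x ≤ a + c` (`QuasiLength.le_of_pow_le`). Consequently `ℓ` is conjugation invariant up to
an error `c`, and if `x` is conjugate both to `w y` and to `z w⁻¹`, then `ℓ x` is at most the
average of `ℓ y` and `ℓ z`, up to an error `3 c / 2` (`QuasiLength.le_average`): in
`(w y) ^ n (s⁻¹ t) (z w⁻¹) ^ n` the outermost `w` and `w⁻¹` can be removed `n` times, each time at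
the cost of `c`.

Put `q = ⁅x, y⁆` and `f (m, k) = ℓ (x ^ m q ^ k)` for integers `m`, `k`. The averaging lemma gives
`f (m, k) ≤ (f (m - 1, k) + f (m + 1, k - 1)) / 2 + 2 c`. Running the corresponding random walk for
`2 n` steps from `(0, n)` brings it to within distance of order `√n` of the origin on average, so
`f (0, n) ≤ 4 c n + o(n)`. The probabilistic estimate is replaced by an explicit computation: `f`
grows at most linearly, hence is at most `ε (m ^ 2 + k ^ 2) + C` for each `ε > 0`, and averages of
quadratic polynomials along the walk are computed exactly (`QuasiLength.walk`).

Finally, if `x ^ n` is a product of at most `ε n` commutators, then `ℓ (x ^ N) ≤ 5 c ε N + O(1)`,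
so `ℓ x ≤ 5 c ε + c` for every `ε > 0`.
-/

/-- Subadditivity of `ℓ`, together with `2 ℓ x - c ≤ ℓ (x ^ 2)`. -/
structure QuasiLength {G : Type*} [Group G] (c : ℝ) (ℓ : G → ℝ) : Prop where
  tri : ∀ x y : G, ℓ (x * y) ≤ ℓ x + ℓ y
  sq : ∀ x : G, 2 * ℓ x - c ≤ ℓ (x ^ 2)

namespace QuasiLength

variable {G : Type*} [Group G] {c : ℝ} {ℓ : G → ℝ}

lemma c_nonneg (h : QuasiLength c ℓ) : 0 ≤ c := by
  have h1 := h.tri 1 1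
  have h2 := h.sq 1
  simp only [mul_one, one_pow] at h1 h2
  linarith

lemma pow_two_pow (h : QuasiLength c ℓ) (x : G) (k : ℕ) :
    2 ^ k * (ℓ x - c) + c ≤ ℓ (x ^ 2 ^ k) := by
  induction k with
  | zero => simp
  | succ k ih =>
    have := h.sq (x ^ 2 ^ k)
    rw [← pow_mul, ← pow_succ] at this
    rw [pow_succ (2 : ℝ)]
    linarith

/-- The values of `ℓ` on powers of `x` control `ℓ x` up to an error `c`. -/
lemma le_of_pow_le (h : QuasiLength c ℓ) {x : G} {a b : ℝ}
    (hx : ∀ n : ℕ, ℓ (x ^ n) ≤ a * n + b) : ℓ x ≤ a + c := by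
  by_contra! hlt
  have hpos : 0 < ℓ x - c - a := by linarith
  obtain ⟨k, hk⟩ := pow_unbounded_of_one_lt ((b - c) / (ℓ x - c - a)) (one_lt_two (α := ℝ))
  rw [div_lt_iff₀ hpos] at hk
  have h1 := h.pow_two_pow x k
  have h2 := hx (2 ^ k)
  push_cast at h2
  linarith

lemma pow_le (h : QuasiLength c ℓ) (x : G) (n : ℕ) : ℓ (x ^ n) ≤ ℓ x * n + ℓ 1 := by
  induction n with
  | zero => simp
  | succ n ih =>
    have := h.tri (x ^ n) x
    rw [pow_succ]
    push_cast
    linarith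

lemma conj_le (h : QuasiLength c ℓ) (s x : G) : ℓ (s * x * s⁻¹) ≤ ℓ x + c := by
  refine h.le_of_pow_le (b := ℓ s + ℓ 1 + ℓ s⁻¹) fun n => ?_
  rw [conj_pow]
  have h1 := h.tri (s * x ^ n) s⁻¹
  have h2 := h.tri s (x ^ n)
  have h3 := h.pow_le x n
  linarith

/-- Removing the outermost pair `w`, `w⁻¹` is a conjugation, so it costs `c`; the factors `y` and `z`
are then split off by subadditivity. -/
lemma peel (h : QuasiLength c ℓ) (w y z g : G) (n : ℕ) :
    ℓ ((w * y) ^ n * g * (z * w⁻¹) ^ n) ≤ (ℓ y + ℓ z + c) * n + ℓ g := by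
  induction n with
  | zero => simp
  | succ n ih =>
    have e : (w * y) ^ (n + 1) * g * (z * w⁻¹) ^ (n + 1)
        = w * (y * ((w * y) ^ n * g * (z * w⁻¹) ^ n) * z) * w⁻¹ := by
      rw [pow_succ' (w * y), pow_succ (z * w⁻¹)]
      group
    rw [e]
    have h1 := h.conj_le w (y * ((w * y) ^ n * g * (z * w⁻¹) ^ n) * z)
    have h2 := h.tri (y * ((w * y) ^ n * g * (z * w⁻¹) ^ n)) z
    have h3 := h.tri y ((w * y) ^ n * g * (z * w⁻¹) ^ n)
    push_cast
    linarith

lemma le_average (h : QuasiLength c ℓ) {x s t w y z : G} (h₁ : x = s * (w * y) * s⁻¹)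
    (h₂ : x = t * (z * w⁻¹) * t⁻¹) : ℓ x ≤ (ℓ y + ℓ z) / 2 + 3 * c / 2 := by
  have key : ℓ (x ^ 2) ≤ (ℓ y + ℓ z + c) + c := by
    refine h.le_of_pow_le (b := ℓ s + ℓ (s⁻¹ * t) + ℓ t⁻¹) fun n => ?_
    have e : (x ^ 2) ^ n = s * ((w * y) ^ n * (s⁻¹ * t) * (z * w⁻¹) ^ n) * t⁻¹ := by
      rw [← pow_mul, two_mul, pow_add]
      nth_rewrite 1 [h₁]
      rw [h₂, conj_pow, conj_pow]
      simp only [mul_assoc]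
    rw [e]
    have h3 := h.tri (s * ((w * y) ^ n * (s⁻¹ * t) * (z * w⁻¹) ^ n)) t⁻¹
    have h4 := h.tri s ((w * y) ^ n * (s⁻¹ * t) * (z * w⁻¹) ^ n)
    have h5 := h.peel w y z (s⁻¹ * t) n
    linarith
  have := h.sq x
  linarith

/-- The element `x ^ m * q ^ k` equals `x * (x ^ (m - 1) * q ^ k)`, and it is also conjugate to
`z * x⁻¹` for a conjugate `z` of `x ^ (m + 1) * q ^ (k - 1)`. -/
lemma step (h : QuasiLength c ℓ) {x y q : G} (hq : q = x * y * x⁻¹ * y⁻¹) (m k : ℤ) :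
    ℓ (x ^ m * q ^ k)
      ≤ (ℓ (x ^ (m - 1) * q ^ k) + ℓ (x ^ (m + 1) * q ^ (k - 1))) / 2 + 2 * c := by
  have e₁ : x ^ m * q ^ k = 1 * (x * (x ^ (m - 1) * q ^ k)) * 1⁻¹ := by
    rw [← mul_assoc x, ← zpow_one_add, add_sub_cancel, one_mul, inv_one, mul_one]
  have e₂ : x ^ m * q ^ k
      = y * (((x * y)⁻¹ * (x ^ (m + 1) * q ^ (k - 1)) * (x * y)⁻¹⁻¹) * x⁻¹) * y⁻¹ := by
    have : q ^ k = q ^ (k - 1) * (x * y * x⁻¹ * y⁻¹) := by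
      rw [← hq, ← zpow_add_one, sub_add_cancel]
    rw [this, add_comm m 1, zpow_one_add]
    generalize q ^ (k - 1) = r
    generalize x ^ m = u
    group
  have h1 := h.le_average e₁ e₂
  have h2 := h.conj_le (x * y)⁻¹ (x ^ (m + 1) * q ^ (k - 1))
  linarith

lemma zpow_le (h : QuasiLength c ℓ) (x : G) {ε : ℝ} (hε : 0 < ε) :
    ∃ C : ℝ, ∀ m : ℤ, ℓ (x ^ m) ≤ ε * (m : ℝ) ^ 2 + C := by
  -- Completing the square dominates the linear growth of `ℓ` on powers by a quadratic.
  have am (a t : ℝ) : a * t ≤ ε * t ^ 2 + a ^ 2 / (4 * ε) := by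
    have e : ε * t ^ 2 + a ^ 2 / (4 * ε) - a * t = (2 * ε * t - a) ^ 2 / (4 * ε) := by
      field_simp
      ring
    have : 0 ≤ (2 * ε * t - a) ^ 2 / (4 * ε) := by positivity
    linarith
  refine ⟨ℓ x ^ 2 / (4 * ε) + ℓ x⁻¹ ^ 2 / (4 * ε) + ℓ 1, fun m => ?_⟩
  have p₁ : 0 ≤ ℓ x ^ 2 / (4 * ε) := by positivity
  have p₂ : 0 ≤ ℓ x⁻¹ ^ 2 / (4 * ε) := by positivity
  obtain ⟨n, rfl | rfl⟩ := m.eq_nat_or_neg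
  · have h1 := h.pow_le x n
    have h2 := am (ℓ x) n
    rw [zpow_natCast, Int.cast_natCast]
    linarith
  · have h1 := h.pow_le x⁻¹ n
    have h2 := am (ℓ x⁻¹) n
    rw [zpow_neg, zpow_natCast, ← inv_pow, Int.cast_neg, Int.cast_natCast, neg_sq]
    linarith

/-- A function on `ℤ × ℤ` dominated by a quadratic, and by its average over the two neighbours
`(m - 1, k)`, `(m + 1, k - 1)` up to an error `d`, is bounded by the expectation of the quadratic
after `N` steps of the corresponding random walk, up to an error `N d`. The drift of the walk is
`(0, -1/2)` and the variances of the coordinates of one step are `1` and `1/4`. -/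
lemma walk {f : ℤ → ℤ → ℝ} {d ε C : ℝ}
    (hf : ∀ m k, f m k ≤ (f (m - 1) k + f (m + 1) (k - 1)) / 2 + d)
    (hb : ∀ m k : ℤ, f m k ≤ ε * ((m : ℝ) ^ 2 + (k : ℝ) ^ 2) + C) (N : ℕ) (m k : ℤ) :
    f m k ≤ d * N + ε * ((m : ℝ) ^ 2 + N + (k - N / 2 : ℝ) ^ 2 + N / 4) + C := by
  induction N generalizing m k with
  | zero => simpa using hb m k
  | succ N ih =>
    have h1 := ih (m - 1) k
    have h2 := ih (m + 1) (k - 1)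
    have h3 := hf m k
    push_cast at h1 h2 ⊢
    linarith

lemma commutator_le (h : QuasiLength c ℓ) (x y : G) : ℓ (x * y * x⁻¹ * y⁻¹) ≤ 5 * c := by
  refine le_of_forall_pos_le_add fun δ hδ => ?_
  generalize hq : x * y * x⁻¹ * y⁻¹ = q
  have hε : 0 < 2 * δ / 5 := by positivity
  obtain ⟨C₁, h₁⟩ := h.zpow_le x hε
  obtain ⟨C₂, h₂⟩ := h.zpow_le q hε
  have hb : ∀ m k : ℤ,
      ℓ (x ^ m * q ^ k) ≤ 2 * δ / 5 * ((m : ℝ) ^ 2 + (k : ℝ) ^ 2) + (C₁ + C₂) := fun m k => by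
    have h3 := h.tri (x ^ m) (q ^ k)
    have h4 := h₁ m
    have h5 := h₂ k
    linarith
  have : ℓ q ≤ (4 * c + δ) + c := by
    refine h.le_of_pow_le (b := C₁ + C₂) fun n => ?_
    -- After `2 n` steps from `(0, n)` the walk is centred at the origin, with variance `5 n / 2`.
    have := walk (f := fun m k => ℓ (x ^ m * q ^ k)) (h.step hq.symm) hb (2 * n) 0 n
    simp only [zpow_zero, one_mul, zpow_natCast] at this
    push_cast at this
    linarith
  linarith

lemma mul_prod_le (h : QuasiLength c ℓ) (l : List (G × G)) (g : G) :
    ℓ (g * (l.map fun p => p.1 * p.2 * p.1⁻¹ * p.2⁻¹).prod) ≤ ℓ g + 5 * c * l.length := by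
  induction l generalizing g with
  | nil => simp
  | cons p l ih =>
    rw [List.map_cons, List.prod_cons, ← mul_assoc]
    have h1 := ih (g * (p.1 * p.2 * p.1⁻¹ * p.2⁻¹))
    have h2 := h.tri g (p.1 * p.2 * p.1⁻¹ * p.2⁻¹)
    have h3 := h.commutator_le p.1 p.2
    rw [List.length_cons]
    push_cast
    linarith

end QuasiLength

/-- If `G` is perfect with vanishing stable commutator length, then any function `ℓ : G → ℝ`
satisfying the triangle inequality and `ℓ (x^2) ≥ 2 ℓ x - c` is bounded by `c`. -/
theorem perfect_group_bounded_length {G : Type*} [Group G] (c : ℝ) (ℓ : G → ℝ)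
    (hperfect : commutator G = ⊤)
    (hscl : ∀ x : G, ∀ ε : ℝ, 0 < ε → ∃ n : ℕ, 1 ≤ n ∧ ∃ l : List (G × G),
      (l.length : ℝ) ≤ ε * n ∧
      x ^ n = (l.map fun p => p.1 * p.2 * p.1⁻¹ * p.2⁻¹).prod)
    (htri : ∀ x y : G, ℓ (x * y) ≤ ℓ x + ℓ y)
    (hsq : ∀ x : G, 2 * ℓ x - c ≤ ℓ (x ^ 2)) :
    ∀ x : G, ℓ x ≤ c := by
  have h : QuasiLength c ℓ := ⟨htri, hsq⟩
  intro x
  suffices key : ∀ ε : ℝ, 0 < ε → ℓ x ≤ 5 * c * ε + c by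
    refine le_of_forall_pos_le_add fun δ hδ => ?_
    have hc := h.c_nonneg
    -- The summand `1` keeps the denominator positive when `c = 0`.
    have h1 := key (δ / (5 * c + 1)) (by positivity)
    have h2 : (5 * c + 1) * (δ / (5 * c + 1)) = δ := mul_div_cancel₀ δ (by positivity)
    have h3 : 0 < δ / (5 * c + 1) := by positivity
    linarith
  intro ε hε
  obtain ⟨n, hn, l, hl, hx⟩ := hscl x ε hε
  have hc := h.c_nonneg
  have hmul : ∀ (r m : ℕ), ℓ (x ^ r * (x ^ n) ^ m) ≤ ℓ (x ^ r) + 5 * c * ε * n * m := by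
    intro r m
    induction m with
    | zero => simp
    | succ m ih =>
      have h1 := h.mul_prod_le l (x ^ r * (x ^ n) ^ m)
      rw [← hx, mul_assoc, ← pow_succ] at h1
      have h2 := mul_le_mul_of_nonneg_left hl (by positivity : 0 ≤ 5 * c)
      push_cast
      linarith
  refine h.le_of_pow_le (b := ∑ r ∈ Finset.range n, |ℓ (x ^ r)|) fun N => ?_
  have h1 := hmul (N % n) (N / n)
  rw [← pow_mul, ← pow_add, Nat.mod_add_div] at h1
  have h2 : |ℓ (x ^ (N % n))| ≤ ∑ r ∈ Finset.range n, |ℓ (x ^ r)| :=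
    Finset.single_le_sum (f := fun r => |ℓ (x ^ r)|) (fun _ _ => abs_nonneg _)
      (Finset.mem_range.2 (Nat.mod_lt N hn))
  have h3 := le_abs_self (ℓ (x ^ (N % n)))
  have h4 : (n : ℝ) * (N / n : ℕ) ≤ N := by exact_mod_cast Nat.mul_div_le N n
  have h5 := mul_le_mul_of_nonneg_left h4 (by positivity : 0 ≤ 5 * c * ε)
  linarith
end
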